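/- arXiv:1211.2565 — 2 statements merged into one kernel-verified Lean document; each statement's English description precedes it below -/
import Mathlib

section
/- Let (X, ω) be a 2n-dimensional closed symplectic manifold satisfying the Hard Lefschetz Condition. Then the de Rham cohomology decomposes as a direct sum H^k_dR(X;ℝ) = ⊕_{r∈ℕ} H^{(r,k−2r)}_ω(X;ℝ) for every degree k. -/
open Submodule

noncomputable section

/-- An algebraic model of the de Rham complex of a closed (compact, without boundary)
smooth manifold `X` of dimension `2 * n` endowed with a symplectic structure `ω`
(a non-degenerate `d`-closed `2`-form): `M` is the space of (inhomogeneous) real smooth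
differential forms, `Ω k` the subspace of `k`-forms, `d` the exterior differential,
`wedge` the wedge product, `ω` the symplectic form (so that `wedge ω` is the Lefschetz
operator `L`), `Λ = -ι_{ω⁻¹}` the dual Lefschetz operator, and `integral` the integration
of top-degree forms over the closed manifold `X`. -/
structure ClosedSymplecticManifold (n : ℕ) where
  M : Type*
  [acg : AddCommGroup M]
  [mod : Module ℝ M]
  Ω : ℤ → Submodule ℝ M
  Ω_neg : ∀ k : ℤ, k < 0 → Ω k = ⊥
  Ω_top : ∀ k : ℤ, 2 * (n : ℤ) < k → Ω k = ⊥
  Ω_internal : DirectSum.IsInternal Ω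
  d : M →ₗ[ℝ] M
  d_mem : ∀ (k : ℤ), ∀ α ∈ Ω k, d α ∈ Ω (k + 1)
  d_d : ∀ α, d (d α) = 0
  wedge : M →ₗ[ℝ] M →ₗ[ℝ] M
  wedge_mem : ∀ (k l : ℤ), ∀ α ∈ Ω k, ∀ β ∈ Ω l, wedge α β ∈ Ω (k + l)
  wedge_assoc : ∀ α β γ, wedge (wedge α β) γ = wedge α (wedge β γ)
  one : M
  one_mem : one ∈ Ω 0
  one_wedge : ∀ α, wedge one α = α
  wedge_comm : ∀ (k l : ℤ), ∀ α ∈ Ω k, ∀ β ∈ Ω l,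
      wedge α β = ((-1 : ℝ) ^ (k * l)) • wedge β α
  leibniz : ∀ (k : ℤ), ∀ α ∈ Ω k, ∀ β,
      d (wedge α β) = wedge (d α) β + ((-1 : ℝ) ^ k) • wedge α (d β)
  ω : M
  ω_mem : ω ∈ Ω 2
  dω : d ω = 0
  /-- non-degeneracy of `ω`: `L^k : Ω^{n-k} → Ω^{n+k}` is injective … -/
  lefschetz_inj : ∀ k : ℕ, k ≤ n → ∀ α ∈ Ω ((n : ℤ) - k), (wedge ω ^ k) α = 0 → α = 0
  /-- … and surjective. -/
  lefschetz_surj : ∀ k : ℕ, k ≤ n → ∀ β ∈ Ω ((n : ℤ) + k),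
      ∃ α ∈ Ω ((n : ℤ) - k), (wedge ω ^ k) α = β
  Λ : M →ₗ[ℝ] M
  Λ_mem : ∀ (k : ℤ), ∀ α ∈ Ω k, Λ α ∈ Ω (k - 2)
  /-- the `𝔰𝔩(2;ℝ)`-commutation relation `[Λ, L] = (n - k)·id` on `k`-forms -/
  sl2 : ∀ (k : ℤ), ∀ α ∈ Ω k, Λ (wedge ω α) - wedge ω (Λ α) = ((n : ℤ) - k) • α
  /-- a `k`-form `β` is primitive iff `Λ β = 0` iff `L^{n-k+1} β = 0` -/
  primitive_iff : ∀ k : ℕ, k ≤ n → ∀ α ∈ Ω (k : ℤ),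
      (Λ α = 0 ↔ (wedge ω ^ (n - k + 1)) α = 0)
  integral : M →ₗ[ℝ] ℝ
  integral_ne_top : ∀ (k : ℤ), k ≠ 2 * (n : ℤ) → ∀ α ∈ Ω k, integral α = 0
  /-- Stokes' theorem on the closed manifold `X` -/
  stokes : ∀ α, integral (d α) = 0
  /-- positivity of the symplectic volume: for a function `f ≠ 0`, `∫_X f·f·ωⁿ > 0` -/
  volume_pos : ∀ f ∈ Ω 0, f ≠ 0 → 0 < integral (wedge f (wedge f ((wedge ω ^ n) one)))
  /-- Poincaré duality: non-degeneracy of the intersection pairing on cohomology -/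
  poincare_duality : ∀ (k : ℤ), ∀ α ∈ Ω k, d α = 0 →
      (∀ β ∈ Ω (2 * (n : ℤ) - k), d β = 0 → integral (wedge α β) = 0) →
      α ∈ (Ω (k - 1)).map d

attribute [instance] ClosedSymplecticManifold.acg ClosedSymplecticManifold.mod

namespace ClosedSymplecticManifold

variable {n : ℕ} (S : ClosedSymplecticManifold n)

/-- the Lefschetz operator `L = ω ∧ ·` -/
def L : S.M →ₗ[ℝ] S.M := S.wedge S.ω

/-- closed `k`-forms -/
def Zc (k : ℤ) : Submodule ℝ S.M := S.Ω k ⊓ LinearMap.ker S.d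

/-- exact `k`-forms -/
def Bc (k : ℤ) : Submodule ℝ S.M := (S.Ω (k - 1)).map S.d

/-- the de Rham cohomology group `H^k_{dR}(X; ℝ)` -/
abbrev Hc (k : ℤ) := ↥(S.Zc k) ⧸ (S.Bc k).comap (S.Zc k).subtype

/-- the de Rham cohomology class of a closed `k`-form -/
abbrev cls (k : ℤ) (a : S.Zc k) : S.Hc k := Submodule.Quotient.mk a

/-- the subgroup `H^{(r, k-2r)}_ω(X; ℝ) ⊆ H^k_{dR}(X;ℝ)` of classes admitting a representative
`L^r β` with `β` a primitive `(k - 2r)`-form -/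
def Hsub (k : ℤ) (r : ℕ) : Submodule ℝ (S.Hc k) :=
  ((((S.Ω (k - 2 * r) ⊓ LinearMap.ker S.Λ).map (S.L ^ r)).comap (S.Zc k).subtype)).map
    ((S.Bc k).comap (S.Zc k).subtype).mkQ

end ClosedSymplecticManifold

namespace ClosedSymplecticManifold

variable {n : ℕ} (S : ClosedSymplecticManifold n)

/-- The **Hard Lefschetz Condition**: for every `k ∈ ℕ`, the map
`L^k : H^{n-k}_dR(X;ℝ) → H^{n+k}_dR(X;ℝ)` induced by cup product with `[ω]^k` is an
isomorphism (stated on representatives: it is injective and surjective on cohomology). -/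
def HardLefschetz : Prop :=
  ∀ k : ℕ,
    (∀ α ∈ S.Zc ((n : ℤ) - k), (S.L ^ k) α ∈ S.Bc ((n : ℤ) + k) → α ∈ S.Bc ((n : ℤ) - k)) ∧
    (∀ β ∈ S.Zc ((n : ℤ) + k), ∃ α ∈ S.Zc ((n : ℤ) - k), (S.L ^ k) α - β ∈ S.Bc ((n : ℤ) + k))

end ClosedSymplecticManifold

/-!
By `𝔰𝔩₂`, a primitive form `β` of degree `s` satisfies `Λ L^(j+1) β = (j + 1) (n - s - j) L^j β`;
as `L` is nilpotent, descending along this formula kills `L^j β` for every `j > n - s`.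

*Spanning.* Let `k = n - r` and `L^(r+1) [α] = 0`, say `L^(r+1) α = dγ`. On forms, `L^(r+1)` maps
degree `k - 1` onto the degree of `γ`, so `γ = L^(r+1) δ` and `α - dδ` is a primitive representative
of `[α]`. Surjectivity of `L^(r+2) : H^(k-2) → H^(2n-k+2)` corrects an arbitrary class of degree `k`
by an element of `L H^(k-2)` to one killed by `L^(r+1)`, hence `H^k = H^(0,k) + L H^(k-2)`, and
induction on `k` settles the degrees up to `n`. The others are reached by `L^r : H^(n-r) → H^(n+r)`.

*Independence.* If `n + r < k` then `H^(r,k-2r) = 0`. Otherwise `t = n + r - k` is such that `L^t`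
kills `H^(j,k-2j)` for all `j < r`, while it is injective on `H^(r,k-2r)`: for `t > 0`, `L^r` is
injective on `(k-2r+1)`-forms, so `dβ = 0` as soon as `L^r β` is closed, and the Hard Lefschetz
Condition says that `L^(t+r)` is injective on `H^(k-2r)`.
-/

theorem iSupIndep_of_disjoint_biSup_lt {ι α : Type*} [LinearOrder ι] [CompleteLattice α]
    [IsModularLattice α] [IsCompactlyGenerated α] {f : ι → α}
    (h : ∀ i, Disjoint (f i) (⨆ j < i, f j)) : iSupIndep f := by
  refine iSupIndep_iff_supIndep.2 fun s ↦ ?_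
  induction s using Finset.induction_on_max with
  | empty => exact Finset.supIndep_empty f
  | insert i s hlt ih =>
    exact ih.insert ((h i).mono_right (Finset.sup_le fun j hj ↦ le_iSup₂_of_le j (hlt j hj) le_rfl))

namespace ClosedSymplecticManifold

variable {n : ℕ} (S : ClosedSymplecticManifold n)

lemma d_L (α : S.M) : S.d (S.L α) = S.L (S.d α) := by
  simpa [L, S.dω] using S.leibniz 2 S.ω S.ω_mem α

lemma d_L_pow (r : ℕ) (α : S.M) : S.d ((S.L ^ r) α) = (S.L ^ r) (S.d α) :=
  LinearMap.congr_fun (Commute.pow_right (LinearMap.ext S.d_L : Commute S.d S.L) r) α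

variable {S} {k m : ℤ}

lemma L_pow_apply_L_pow (r t : ℕ) (α : S.M) : (S.L ^ r) ((S.L ^ t) α) = (S.L ^ (r + t)) α := by
  rw [pow_add, Module.End.mul_apply]

lemma L_pow_mem_Ω (r : ℕ) {α : S.M} (hα : α ∈ S.Ω k) : (S.L ^ r) α ∈ S.Ω (k + 2 * r) := by
  induction r with
  | zero => simpa using hα
  | succ r ih =>
    rw [pow_succ', Module.End.mul_apply]
    have hdeg : k + 2 * (r + 1 : ℕ) = 2 + (k + 2 * r) := by push_cast; ring
    exact hdeg ▸ S.wedge_mem 2 _ S.ω S.ω_mem _ ih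

lemma d_mem_Zc {γ : S.M} (hγ : γ ∈ S.Ω (k - 1)) : S.d γ ∈ S.Zc k :=
  ⟨by simpa using S.d_mem _ γ hγ, S.d_d γ⟩

lemma L_pow_mem_Zc (r : ℕ) {α : S.M} (hα : α ∈ S.Zc k) : (S.L ^ r) α ∈ S.Zc (k + 2 * r) :=
  ⟨L_pow_mem_Ω r hα.1, (S.d_L_pow r α).trans (by rw [hα.2, map_zero])⟩

lemma L_pow_mem_Bc (r : ℕ) {α : S.M} (hα : α ∈ S.Bc k) : (S.L ^ r) α ∈ S.Bc (k + 2 * r) := by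
  obtain ⟨γ, hγ, rfl⟩ := hα
  exact ⟨(S.L ^ r) γ, by simpa [sub_add_eq_add_sub] using L_pow_mem_Ω r hγ, S.d_L_pow r γ⟩

lemma eq_zero_of_mem_Ω_of_neg (hk : k < 0) {α : S.M} (hα : α ∈ S.Ω k) : α = 0 := by
  simpa [S.Ω_neg k hk] using hα

lemma eq_zero_of_mem_Ω_of_top_lt (hk : 2 * n < k) {α : S.M} (hα : α ∈ S.Ω k) : α = 0 := by
  simpa [S.Ω_top k hk] using hα

lemma eq_zero_of_L_pow_eq_zero {r : ℕ} (hk : k + r ≤ n) {α : S.M} (hα : α ∈ S.Ω k)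
    (h : (S.L ^ r) α = 0) : α = 0 := by
  rcases lt_or_ge k 0 with hk0 | hk0
  · exact eq_zero_of_mem_Ω_of_neg hk0 hα
  obtain ⟨t, rfl⟩ : ∃ t : ℕ, k = n - (t + r : ℕ) := ⟨(n - k - r).toNat, by omega⟩
  refine S.lefschetz_inj (t + r) (by omega) α hα ?_
  change (S.L ^ (t + r)) α = 0
  rw [← L_pow_apply_L_pow, h, map_zero]

lemma exists_L_pow_eq {r : ℕ} (hk : k = n - r) {γ : S.M} (hγ : γ ∈ S.Ω (k + 2 * r)) :
    ∃ δ ∈ S.Ω k, (S.L ^ r) δ = γ := by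
  subst hk
  rcases le_or_gt r n with hr | hr
  · exact S.lefschetz_surj r hr γ (by convert hγ using 2; ring)
  · exact ⟨0, zero_mem _, by rw [map_zero, eq_zero_of_mem_Ω_of_top_lt (by omega) hγ]⟩

lemma Λ_eq_zero_iff {r : ℕ} (hk : k = n - r) {α : S.M} (hα : α ∈ S.Ω k) :
    S.Λ α = 0 ↔ (S.L ^ (r + 1)) α = 0 := by
  subst hk
  rcases le_or_gt r n with hr | hr
  · have := S.primitive_iff (n - r) (n.sub_le r) α (by simpa [hr] using hα)
    rwa [Nat.sub_sub_self hr] at this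
  · simp [eq_zero_of_mem_Ω_of_neg (by omega) hα]

lemma Λ_L_pow_succ {β : S.M} (hβ : β ∈ S.Ω k) (hΛ : S.Λ β = 0) (r : ℕ) :
    S.Λ ((S.L ^ (r + 1)) β) = ((r + 1) * (n - k - r) : ℤ) • (S.L ^ r) β := by
  have commutator (r : ℕ) : S.Λ ((S.L ^ (r + 1)) β) =
      (n - (k + 2 * r) : ℤ) • (S.L ^ r) β + S.L (S.Λ ((S.L ^ r) β)) := by
    rw [pow_succ', Module.End.mul_apply]
    exact sub_eq_iff_eq_add.1 (S.sl2 _ _ (L_pow_mem_Ω r hβ))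
  induction r with
  | zero => simpa [hΛ] using commutator 0
  | succ r ih =>
    rw [commutator, ih, map_zsmul, ← Module.End.mul_apply, ← pow_succ', ← add_smul]
    congr 1
    push_cast
    ring

lemma L_pow_eq_zero_of_Λ_eq_zero {β : S.M} (hβ : β ∈ S.Ω k) (hΛ : S.Λ β = 0) {r : ℕ}
    (hr : n - k < r) : (S.L ^ r) β = 0 := by
  have descend (j : ℕ) (h : (S.L ^ (r + j)) β = 0) : (S.L ^ r) β = 0 := by
    induction j with
    | zero => exact h
    | succ j ih =>
      have hz := Λ_L_pow_succ hβ hΛ (r + j)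
      rw [add_assoc, h, map_zero, ← Int.cast_smul_eq_zsmul ℝ] at hz
      have hc : (((r + j : ℕ) + 1) * (n - k - (r + j : ℕ)) : ℤ) ≠ 0 :=
        mul_ne_zero (by omega) (by omega)
      exact ih ((smul_eq_zero.1 hz.symm).resolve_left (Int.cast_ne_zero.2 hc))
  exact descend n (eq_zero_of_mem_Ω_of_top_lt (by push_cast; omega) (L_pow_mem_Ω (r + n) hβ))

lemma cls_eq_zero {a : S.Zc k} : S.cls k a = 0 ↔ (a : S.M) ∈ S.Bc k :=
  Submodule.Quotient.mk_eq_zero _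

lemma mem_Hsub {r : ℕ} {x : S.Hc k} :
    x ∈ S.Hsub k r ↔ ∃ β ∈ S.Ω (k - 2 * r), S.Λ β = 0 ∧
      ∃ h : (S.L ^ r) β ∈ S.Zc k, S.cls k ⟨(S.L ^ r) β, h⟩ = x := by
  constructor
  · rintro ⟨⟨_, hz⟩, ⟨β, ⟨hβ, hΛ⟩, rfl⟩, rfl⟩
    exact ⟨β, hβ, hΛ, hz, rfl⟩
  · rintro ⟨β, hβ, hΛ, hz, rfl⟩
    exact ⟨⟨_, hz⟩, ⟨β, ⟨hβ, hΛ⟩, rfl⟩, rfl⟩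

variable (S) in
/-- The map `H^k_dR → H^m_dR` induced by `L ^ r`, i.e. the cup product with `[ω]^r`. The target
degree `m` is tied to `k + 2 * r` by a proof only, so that no transport between degrees occurs. -/
def lefschetzMap (r : ℕ) (hm : m = k + 2 * r) : S.Hc k →ₗ[ℝ] S.Hc m :=
  Submodule.mapQ _ _ ((S.L ^ r).restrict fun _ hα ↦ hm ▸ L_pow_mem_Zc r hα)
    fun _ hα ↦ hm ▸ L_pow_mem_Bc r hα

lemma lefschetzMap_eq_zero_iff {r : ℕ} {hm : m = k + 2 * r} {a : S.Zc k} :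
    S.lefschetzMap r hm (S.cls k a) = 0 ↔ (S.L ^ r) (a : S.M) ∈ S.Bc m :=
  cls_eq_zero

lemma lefschetzMap_lefschetzMap {l : ℤ} (r t : ℕ) (hm : m = k + 2 * r) (hl : l = m + 2 * t)
    (x : S.Hc k) :
    S.lefschetzMap t hl (S.lefschetzMap r hm x) = S.lefschetzMap (t + r) (by omega) x := by
  obtain ⟨a, rfl⟩ := Submodule.Quotient.mk_surjective _ x
  exact congrArg (S.cls l) (Subtype.ext (L_pow_apply_L_pow t r (a : S.M)))

lemma map_lefschetzMap_Hsub_le (t : ℕ) (hm : m = k + 2 * t) (r : ℕ) :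
    (S.Hsub k r).map (S.lefschetzMap t hm) ≤ S.Hsub m (t + r) := by
  rintro _ ⟨x, hx, rfl⟩
  obtain ⟨β, hβ, hΛ, hz, rfl⟩ := mem_Hsub.1 hx
  have hdeg : m - 2 * (t + r : ℕ) = k - 2 * r := by omega
  rw [mem_Hsub, hdeg]
  simp only [← L_pow_apply_L_pow]
  exact ⟨β, hβ, hΛ, hm ▸ L_pow_mem_Zc t hz, rfl⟩

lemma map_lefschetzMap_iSup_Hsub_le (t : ℕ) (hm : m = k + 2 * t) :
    (⨆ r, S.Hsub k r).map (S.lefschetzMap t hm) ≤ ⨆ r, S.Hsub m r := by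
  rw [Submodule.map_iSup]
  exact iSup_le fun r ↦ (map_lefschetzMap_Hsub_le t hm r).trans (le_iSup _ _)

lemma ker_lefschetzMap_le_Hsub_zero {r : ℕ} (hk : k = n - r) (hm : m = k + 2 * (r + 1 : ℕ)) :
    LinearMap.ker (S.lefschetzMap (r + 1) hm) ≤ S.Hsub k 0 := by
  intro x hx
  obtain ⟨⟨α, hα⟩, rfl⟩ := Submodule.Quotient.mk_surjective _ x
  obtain ⟨γ, hγ, hLα⟩ := lefschetzMap_eq_zero_iff.1 hx
  have hdeg : m - 1 = (k - 1) + 2 * (r + 1 : ℕ) := by omega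
  obtain ⟨δ, hδ, rfl⟩ := exists_L_pow_eq (k := k - 1) (by push_cast; omega) (hdeg ▸ hγ)
  have hz : α - S.d δ ∈ S.Zc k := sub_mem hα (d_mem_Zc hδ)
  have hΛ : S.Λ (α - S.d δ) = 0 := by
    rw [Λ_eq_zero_iff hk hz.1, map_sub, ← d_L_pow]
    exact sub_eq_zero.2 hLα.symm
  refine mem_Hsub.2 ⟨α - S.d δ, by simpa using hz.1, hΛ, hz, (Submodule.Quotient.eq _).2 ?_⟩
  exact ⟨-δ, neg_mem hδ, by simp⟩

lemma Hsub_le_ker_lefschetzMap {r t : ℕ} (h : n + r < k + t) (hm : m = k + 2 * t) :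
    S.Hsub k r ≤ LinearMap.ker (S.lefschetzMap t hm) := by
  intro x hx
  obtain ⟨β, hβ, hΛ, hz, rfl⟩ := mem_Hsub.1 hx
  have hLβ : (S.L ^ (t + r)) β = 0 := L_pow_eq_zero_of_Λ_eq_zero hβ hΛ (by push_cast; omega)
  rw [LinearMap.mem_ker, lefschetzMap_eq_zero_iff, L_pow_apply_L_pow, hLβ]
  exact zero_mem _

lemma Hsub_eq_bot {r : ℕ} (h : n + r < k) : S.Hsub k r = ⊥ := by
  refine (Submodule.eq_bot_iff _).2 fun x hx ↦ ?_
  obtain ⟨β, hβ, hΛ, hz, rfl⟩ := mem_Hsub.1 hx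
  have hLβ : (S.L ^ r) β = 0 := L_pow_eq_zero_of_Λ_eq_zero hβ hΛ (by omega)
  exact cls_eq_zero.2 (by simp [hLβ])

namespace HardLefschetz

lemma lefschetzMap_injective (hS : S.HardLefschetz) {r : ℕ} (hk : k = n - r)
    (hm : m = k + 2 * r) : Function.Injective (S.lefschetzMap r hm) := by
  obtain rfl : m = n + r := by omega
  subst hk
  rw [injective_iff_map_eq_zero]
  intro x hx
  obtain ⟨a, rfl⟩ := Submodule.Quotient.mk_surjective _ x
  exact cls_eq_zero.2 ((hS r).1 a a.2 (lefschetzMap_eq_zero_iff.1 hx))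

lemma lefschetzMap_surjective (hS : S.HardLefschetz) {r : ℕ} (hk : k = n - r)
    (hm : m = k + 2 * r) : Function.Surjective (S.lefschetzMap r hm) := by
  obtain rfl : m = n + r := by omega
  subst hk
  intro y
  obtain ⟨b, rfl⟩ := Submodule.Quotient.mk_surjective _ y
  obtain ⟨α, hα, h⟩ := (hS r).2 b b.2
  exact ⟨S.cls _ ⟨α, hα⟩, (Submodule.Quotient.eq _).2 h⟩

lemma Hsub_zero_sup_range_lefschetzMap_eq_top (hS : S.HardLefschetz) (hk : k ≤ n)
    (hm : k = m + 2 * (1 : ℕ)) :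
    S.Hsub k 0 ⊔ LinearMap.range (S.lefschetzMap 1 hm) = ⊤ := by
  refine eq_top_iff.2 fun x _ ↦ ?_
  obtain ⟨r, hr⟩ : ∃ r : ℕ, k = n - r := ⟨(n - k).toNat, by omega⟩
  obtain ⟨y, hy⟩ := hS.lefschetzMap_surjective (k := m) (r := r + 1 + 1) (by omega) (by omega)
    (S.lefschetzMap (r + 1) rfl x)
  have hker : x - S.lefschetzMap 1 hm y ∈ LinearMap.ker (S.lefschetzMap (r + 1) rfl) := by
    rw [LinearMap.mem_ker, map_sub, lefschetzMap_lefschetzMap, hy, sub_self]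
  exact Submodule.mem_sup.2
    ⟨_, ker_lefschetzMap_le_Hsub_zero hr rfl hker, _, ⟨y, rfl⟩, sub_add_cancel _ _⟩

lemma iSup_Hsub_eq_top_of_le (hS : S.HardLefschetz) {k : ℤ} (hk : k ≤ n) : ⨆ r, S.Hsub k r = ⊤ := by
  rcases lt_or_ge k 0 with hk0 | _
  · refine eq_top_iff.2 fun x _ ↦ ?_
    obtain ⟨a, rfl⟩ := Submodule.Quotient.mk_surjective _ x
    obtain rfl : a = 0 := Subtype.ext (eq_zero_of_mem_Ω_of_neg hk0 a.2.1)
    exact zero_mem _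
  have hm : k = (k - 2) + 2 * (1 : ℕ) := by omega
  rw [eq_top_iff, ← hS.Hsub_zero_sup_range_lefschetzMap_eq_top hk hm, LinearMap.range_eq_map,
    ← iSup_Hsub_eq_top_of_le hS (by omega : k - 2 ≤ n)]
  exact sup_le (le_iSup _ 0) (map_lefschetzMap_iSup_Hsub_le 1 hm)
-- Unlike `k.toNat`, this decreases also from `k = 0` to `k = -2`.
termination_by (k + 1).toNat

lemma iSup_Hsub_eq_top (hS : S.HardLefschetz) (k : ℤ) : ⨆ r, S.Hsub k r = ⊤ := by
  rcases le_or_gt k n with hk | hk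
  · exact hS.iSup_Hsub_eq_top_of_le hk
  obtain ⟨r, rfl⟩ : ∃ r : ℕ, k = n + r := ⟨(k - n).toNat, by omega⟩
  have hm : (n + r : ℤ) = (n - r) + 2 * r := by ring
  rw [eq_top_iff, ← LinearMap.range_eq_top.2 (hS.lefschetzMap_surjective rfl hm),
    LinearMap.range_eq_map, ← hS.iSup_Hsub_eq_top_of_le (by omega : (n - r : ℤ) ≤ n)]
  exact map_lefschetzMap_iSup_Hsub_le r hm

lemma disjoint_Hsub_ker_lefschetzMap (hS : S.HardLefschetz) {r t : ℕ} (hk : n + r = k + t)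
    (hm : m = k + 2 * t) :
    Disjoint (S.Hsub k r) (LinearMap.ker (S.lefschetzMap t hm)) := by
  refine Submodule.disjoint_def.2 fun x hx hker ↦ ?_
  obtain ⟨β, hβ, -, hz, rfl⟩ := mem_Hsub.1 hx
  rw [LinearMap.mem_ker, lefschetzMap_eq_zero_iff] at hker
  rcases Nat.eq_zero_or_pos t with rfl | ht
  · obtain rfl : m = k := by simpa using hm
    exact cls_eq_zero.2 (by simpa using hker)
  have hdβ : S.d β = 0 := by
    refine eq_zero_of_L_pow_eq_zero (r := r) (by omega) (S.d_mem _ β hβ) ?_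
    rw [← d_L_pow]
    exact hz.2
  have hβz : β ∈ S.Zc (k - 2 * r) := ⟨hβ, hdβ⟩
  have hinj := hS.lefschetzMap_injective (k := k - 2 * r) (m := m) (r := t + r)
    (by push_cast; omega) (by push_cast; omega)
  have hβB : S.cls _ ⟨β, hβz⟩ = 0 := by
    refine (map_eq_zero_iff _ hinj).1 (lefschetzMap_eq_zero_iff.2 ?_)
    rwa [← L_pow_apply_L_pow]
  have := L_pow_mem_Bc r (cls_eq_zero.1 hβB)
  exact cls_eq_zero.2 (by simpa using this)

lemma iSupIndep_Hsub (hS : S.HardLefschetz) (k : ℤ) : iSupIndep (S.Hsub k) := by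
  refine iSupIndep_of_disjoint_biSup_lt fun r ↦ ?_
  rcases lt_or_ge (n + r : ℤ) k with hr | hr
  · simp [Hsub_eq_bot hr]
  obtain ⟨t, ht⟩ : ∃ t : ℕ, (n + r : ℤ) = k + t := ⟨(n + r - k).toNat, by omega⟩
  exact (hS.disjoint_Hsub_ker_lefschetzMap ht rfl).mono_right
    (iSup₂_le fun j hj ↦ Hsub_le_ker_lefschetzMap (by omega) rfl)

end HardLefschetz

end ClosedSymplecticManifold

/-- **Corollary.** Let `(X, ω)` be a `2n`-dimensional closed symplectic manifold satisfying
the Hard Lefschetz Condition. Then the de Rham cohomology decomposes as a direct sum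
`H^k_dR(X;ℝ) = ⊕_{r ∈ ℕ} H^{(r, k-2r)}_ω(X;ℝ)` for every degree `k`. -/
theorem hlc_cohomology_decomposition {n : ℕ} (S : ClosedSymplecticManifold n)
    (hS : S.HardLefschetz) (k : ℕ) :
    DirectSum.IsInternal (fun r : ℕ => S.Hsub (k : ℤ) r) :=
  DirectSum.isInternal_submodule_of_iSupIndep_of_iSup_eq_top
    (hS.iSupIndep_Hsub k) (hS.iSup_Hsub_eq_top k)

end
end

section
/- Let (X, ω) be a 2n-dimensional closed symplectic manifold and let k ≤ n. Then H^k_dR(X;ℝ) = ⊕_{r∈ℕ} H^{(r,k−2r)}_ω(X;ℝ) if and only if H^k_dR(X;ℝ) = ⊕_{r∈ℕ} L^r H^{(0,k−2r)}_ω(X;ℝ). -/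
open Submodule

noncomputable section

namespace ClosedSymplecticManifold

variable {n : ℕ} (S : ClosedSymplecticManifold n)

/-- `L^r H^{(0, k-2r)}_ω(X;ℝ) ⊆ H^k_dR(X;ℝ)`: the image of `H^{(0, k-2r)}_ω(X;ℝ)` under cup
product with `[ω]^r`, i.e. the classes `[ω^r] ⌣ [β] = [L^r β]` with `β` a `d`-closed primitive
`(k-2r)`-form. -/
def LrH0 (k : ℤ) (r : ℕ) : Submodule ℝ (S.Hc k) :=
  ((((S.Ω (k - 2 * r) ⊓ LinearMap.ker S.Λ ⊓ LinearMap.ker S.d).map (S.L ^ r)).comap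
      (S.Zc k).subtype)).map ((S.Bc k).comap (S.Zc k).subtype).mkQ

end ClosedSymplecticManifold

/-!
The two families of subspaces agree term by term: if `k ≤ n`, `β` is a `(k - 2r)`-form and
`L ^ r β` is closed, then `β` itself is closed. Since `ω` is closed, `d` commutes with `L`, so
`L ^ r (d β) = 0`. For `r ≥ 1` the degree `k - 2r + 1` of `d β` is at most `n - r`, and
non-degeneracy of `ω` makes `L ^ r` injective on forms of degree at most `n - r`.
-/

namespace ClosedSymplecticManifold

variable {n : ℕ} (S : ClosedSymplecticManifold n)

theorem commute_d_L : Commute S.d S.L := by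
  ext β
  simpa [L, S.dω] using S.leibniz 2 S.ω S.ω_mem β

theorem injOn_L_pow {j : ℤ} {r : ℕ} (hjr : j + r ≤ n) : Set.InjOn (S.L ^ r) (S.Ω j) := by
  rw [← LinearMap.disjoint_ker_iff_injOn, LinearMap.disjoint_ker]
  intro α hα hLα
  rcases lt_or_ge j 0 with hj | hj
  · simpa [S.Ω_neg j hj] using hα
  · obtain ⟨m, rfl⟩ : ∃ m : ℕ, j = n - m := ⟨(n - j).toNat, by omega⟩
    exact S.lefschetz_inj m (by omega) α hα
      (Module.End.pow_map_zero_of_le (show r ≤ m by omega) hLα)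

theorem d_eq_zero_of_d_L_pow_eq_zero {j : ℤ} {r : ℕ} {β : S.M} (hjr : r ≠ 0 → j + r < n)
    (hβ : β ∈ S.Ω j) (hLβ : S.d ((S.L ^ r) β) = 0) : S.d β = 0 := by
  rcases eq_or_ne r 0 with rfl | hr
  · simpa using hLβ
  · have hjr' : (j + 1) + r ≤ n := by linarith [hjr hr]
    have hLdβ : (S.L ^ r) (S.d β) = 0 :=
      (LinearMap.congr_fun (S.commute_d_L.pow_right r) β).symm.trans hLβ
    exact S.injOn_L_pow hjr' (S.d_mem j β hβ) (zero_mem _) (hLdβ.trans (map_zero _).symm)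

theorem LrH0_le_Hsub (k : ℤ) (r : ℕ) : S.LrH0 k r ≤ S.Hsub k r :=
  map_mono (comap_mono (map_mono inf_le_left))

theorem Hsub_le_LrH0 {k : ℤ} {r : ℕ} (hk : k ≤ n) : S.Hsub k r ≤ S.LrH0 k r := by
  refine map_mono ?_
  rintro z ⟨β, hβ, hβz : (S.L ^ r) β = z⟩
  have hLβ : S.d ((S.L ^ r) β) = 0 := hβz ▸ z.2.2
  have hdβ : S.d β = 0 := S.d_eq_zero_of_d_L_pow_eq_zero (fun _ => by omega) hβ.1 hLβ
  exact ⟨β, ⟨hβ, hdβ⟩, hβz⟩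

theorem Hsub_eq_LrH0 {k : ℤ} {r : ℕ} (hk : k ≤ n) : S.Hsub k r = S.LrH0 k r :=
  le_antisymm (S.Hsub_le_LrH0 hk) (S.LrH0_le_Hsub k r)

end ClosedSymplecticManifold

/-- **Remark.** Let `X` be a `2n`-dimensional closed manifold endowed with a symplectic
structure `ω`, and let `k ≤ n`. Then `H^k_dR(X;ℝ) = ⊕_{r ∈ ℕ} H^{(r, k-2r)}_ω(X;ℝ)` if and
only if `H^k_dR(X;ℝ) = ⊕_{r ∈ ℕ} L^r H^{(0, k-2r)}_ω(X;ℝ)`. -/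
theorem decomposition_iff_LrH0 {n : ℕ} (S : ClosedSymplecticManifold n) (k : ℕ)
    (hk : k ≤ n) :
    DirectSum.IsInternal (fun r : ℕ => S.Hsub (k : ℤ) r) ↔
    DirectSum.IsInternal (fun r : ℕ => S.LrH0 (k : ℤ) r) := by
  have hkn : (k : ℤ) ≤ n := mod_cast hk
  simp only [S.Hsub_eq_LrH0 hkn]

end
end
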